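/- arXiv:1010.5506 — 2 statements merged into one kernel-verified Lean document; each statement's English description precedes it below -/
import Mathlib

section
/- (MacWilliams identity for EAQEC codes, polynomial form.) Let n ≥ 1 and let W be an F₂-linear subspace of V_n, with weight distributions A_w = |{v ∈ W : wt(v) = w}| and B_w = |{v ∈ W^⊥ : wt(v) = w}|. Then for every real number z with 1 + 3z ≠ 0, Σ_{w=0}^{n} B_w z^w = (1/|W|) · (1+3z)^n · Σ_{w'=0}^{n} A_{w'} · ((1−z)/(1+3z))^{w'}. -/
open Finset

/-- The binary symplectic space modelling `n`-qubit Pauli operators modulo phases. -/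
abbrev V (n : ℕ) := (Fin n → ZMod 2) × (Fin n → ZMod 2)

/-- The Pauli weight of `v = (x, z)`: the number of indices where `(x i, z i) ≠ (0,0)`. -/
def wt {n : ℕ} (v : V n) : ℕ :=
  (Finset.univ.filter fun i => ¬(v.1 i = 0 ∧ v.2 i = 0)).card

/-- The binary symplectic product. -/
def sympl {n : ℕ} (u v : V n) : ZMod 2 :=
  ∑ i, (u.1 i * v.2 i + u.2 i * v.1 i)

lemma sympl_add_left {n : ℕ} (a b w : V n) :
    sympl (a + b) w = sympl a w + sympl b w := by
  simp only [sympl, Prod.fst_add, Prod.snd_add, Pi.add_apply, ← Finset.sum_add_distrib]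
  exact Finset.sum_congr rfl fun i _ => by ring

lemma sympl_smul_left {n : ℕ} (c : ZMod 2) (a w : V n) :
    sympl (c • a) w = c * sympl a w := by
  simp only [sympl, Prod.smul_fst, Prod.smul_snd, Pi.smul_apply, smul_eq_mul,
    Finset.mul_sum]
  exact Finset.sum_congr rfl fun i _ => by ring

/-- The symplectic dual `W^⊥` of a subspace `W ⊆ V n`. -/
def sdual {n : ℕ} (W : Submodule (ZMod 2) (V n)) : Submodule (ZMod 2) (V n) where
  carrier := {u | ∀ w ∈ W, sympl u w = 0}
  add_mem' := fun ha hb w hw => by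
    rw [sympl_add_left, ha w hw, hb w hw, add_zero]
  zero_mem' := fun w hw => by simp [sympl]
  smul_mem' := fun c a ha w hw => by rw [sympl_smul_left, ha w hw, mul_zero]

open scoped Classical

/-!
The proof is Poisson summation on `V n`. For a subspace `W`, the character `v ↦ (-1) ^ λ(u, v)` sums
over `W` to `|W|` if `u ∈ W^⊥` and to `0` otherwise, so `|W|` times the sum of `f` over `W^⊥` is the
sum over `W` of the symplectic Fourier transform of `f`. For `f v = x ^ (n - wt v) * y ^ wt v`,
a product of functions of the single qubits, the transform can be computed qubit by qubit, and it
replaces `x` by `x + 3 * y` (the identity commutes with all four Paulis) and `y` by `x - y` (any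
other Pauli commutes with the identity and itself, and anticommutes with the other two).
-/

lemma addChar_map_sum_eq_prod {ι A M : Type*} [AddCommMonoid A] [CommMonoid M]
    (ψ : AddChar A M) (s : Finset ι) (f : ι → A) :
    ψ (∑ i ∈ s, f i) = ∏ i ∈ s, ψ (f i) :=
  map_sum ψ.toAddMonoidHom f s

section SignChar

variable (R : Type*) [CommRing R]

/-- The sign character `a ↦ (-1) ^ a` of `ZMod 2`, with values in an arbitrary commutative ring. -/
def signChar : AddChar (ZMod 2) R :=
  AddChar.zmodChar 2 neg_one_sq

lemma signChar_one : signChar R 1 = -1 :=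
  pow_one (-1 : R)

lemma sum_signChar_apply {M : Type*} [AddCommGroup M] [Module (ZMod 2) M] [Fintype M]
    (f : Module.Dual (ZMod 2) M) :
    ∑ m, signChar R (f m) = if f = 0 then (Fintype.card M : R) else 0 := by
  split_ifs with hf
  · simp [hf]
  · obtain ⟨w, hw⟩ : ∃ w, f w ≠ 0 := by simpa using DFunLike.ne_iff.mp hf
    have hw_one : f w = 1 := Fin.eq_one_of_ne_zero _ hw
    have hw_ne : w ≠ 0 := fun h => hw (h ▸ map_zero f)
    -- Translation by `w` pairs off opposite signs.
    refine sum_involution (fun m _ => m + w) (fun m _ => ?_) (fun m _ _ => by simpa using hw_ne)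
      (fun m _ => mem_univ _) (fun m _ => ?_)
    · rw [map_add, hw_one, AddChar.map_add_eq_mul, signChar_one, mul_neg_one, add_neg_cancel]
    · rw [add_assoc, ZModModule.add_self, add_zero]

end SignChar

section SymplecticForm

variable {n : ℕ}

lemma sympl_comm (u v : V n) : sympl u v = sympl v u :=
  sum_congr rfl fun i _ => by ring

/-- The symplectic product as a bilinear form on `V n`. -/
def symplForm (n : ℕ) : LinearMap.BilinForm (ZMod 2) (V n) :=
  LinearMap.mk₂ (ZMod 2) sympl sympl_add_left sympl_smul_left
    (fun u v w => by simp only [sympl_comm u, sympl_add_left])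
    (fun c u v => by simp only [sympl_comm u, sympl_smul_left, smul_eq_mul])

lemma mem_sdual_iff_domRestrict_eq_zero {W : Submodule (ZMod 2) (V n)} {u : V n} :
    u ∈ sdual W ↔ (symplForm n u).domRestrict W = 0 := by
  simp only [LinearMap.ext_iff, Subtype.forall]
  rfl

end SymplecticForm

section Weight

variable {n : ℕ}

lemma wt_le (v : V n) : wt v ≤ n :=
  (card_filter_le _ _).trans_eq (card_fin n)

lemma prod_ite_eq_pow_wt {M : Type*} [CommMonoid M] (x y : M) (v : V n) :
    ∏ i, (if v.1 i = 0 ∧ v.2 i = 0 then x else y) = x ^ (n - wt v) * y ^ wt v := by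
  have card_zeros : #{i | v.1 i = 0 ∧ v.2 i = 0} = n - wt v :=
    Nat.eq_sub_of_add_eq <| (card_filter_add_card_filter_not _).trans (card_fin n)
  rw [prod_ite, prod_const, prod_const, card_zeros, wt]

end Weight

section SymplecticFourier

variable {R : Type*} [CommRing R] {n : ℕ}

/-- The Fourier transform of a function on `V n` with respect to the characters
`u ↦ (-1) ^ sympl u v`, without normalisation. -/
def symplFourier (f : V n → R) (v : V n) : R :=
  ∑ u, f u * signChar R (sympl u v)

lemma sum_signChar_sympl (W : Submodule (ZMod 2) (V n)) (u : V n) :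
    ∑ v : W, signChar R (sympl u v) = if u ∈ sdual W then (Fintype.card W : R) else 0 := by
  simp only [mem_sdual_iff_domRestrict_eq_zero]
  exact sum_signChar_apply R ((symplForm n u).domRestrict W)

lemma sum_symplFourier (W : Submodule (ZMod 2) (V n)) (f : V n → R) :
    ∑ v : W, symplFourier f v = Fintype.card W * ∑ u : sdual W, f u := by
  calc ∑ v : W, symplFourier f v
      = ∑ u, f u * ∑ v : W, signChar R (sympl u v) := by
        simp only [symplFourier, mul_sum]
        exact sum_comm
    _ = ∑ u with u ∈ sdual W, f u * Fintype.card W := by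
        simp only [sum_signChar_sympl, mul_ite, mul_zero, sum_filter]
    _ = Fintype.card W * ∑ u : sdual W, f u := by
        rw [← sum_mul, mul_comm, sum_subtype _ (fun u => mem_filter_univ u)]

lemma symplFourier_prod (g : Fin n → ZMod 2 × ZMod 2 → R) (v : V n) :
    symplFourier (fun u => ∏ i, g i (u.1 i, u.2 i)) v =
      ∏ i, ∑ p, g i p * signChar R (p.1 * v.2 i + p.2 * v.1 i) := by
  rw [Fintype.prod_sum]
  refine (Fintype.sum_equiv (Equiv.arrowProdEquivProdArrow _ _ _) _ _ fun p => ?_).symm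
  rw [sympl, addChar_map_sum_eq_prod, ← prod_mul_distrib]
  rfl

lemma sum_qubit_signChar (x y : R) (a b : ZMod 2) :
    ∑ p : ZMod 2 × ZMod 2,
        (if p.1 = 0 ∧ p.2 = 0 then x else y) * signChar R (p.1 * b + p.2 * a) =
      if a = 0 ∧ b = 0 then x + 3 * y else x - y := by
  have univ_eq : (univ : Finset (ZMod 2)) = {0, 1} := rfl
  have one_add_one : (1 : ZMod 2) + 1 = 0 := rfl
  have eq_zero_or_one : ∀ c : ZMod 2, c = 0 ∨ c = 1 := by decide
  rw [Fintype.sum_prod_type]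
  rcases eq_zero_or_one a with rfl | rfl <;> rcases eq_zero_or_one b with rfl | rfl <;>
    simp [univ_eq, one_add_one, signChar_one] <;> ring

lemma symplFourier_pow_wt (x y : R) (v : V n) :
    symplFourier (fun u => x ^ (n - wt u) * y ^ wt u) v =
      (x + 3 * y) ^ (n - wt v) * (x - y) ^ wt v := by
  simp only [← prod_ite_eq_pow_wt, ← sum_qubit_signChar]
  exact symplFourier_prod (fun _ p => if p.1 = 0 ∧ p.2 = 0 then x else y) v

end SymplecticFourier

section WeightEnumerator

variable {R : Type*} [CommSemiring R] {n : ℕ}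

/-- The homogeneous weight enumerator `∑ w, A_w * x ^ (n - w) * y ^ w` of a subspace of `V n`,
where `A_w` is its number of elements of weight `w`, as a function of `x` and `y` in a semiring. -/
noncomputable def weightEnumerator (W : Submodule (ZMod 2) (V n)) (x y : R) : R :=
  ∑ w ∈ range (n + 1), (#{v | v ∈ W ∧ wt v = w} : R) * (x ^ (n - w) * y ^ w)

lemma weightEnumerator_eq_sum (W : Submodule (ZMod 2) (V n)) (x y : R) :
    weightEnumerator W x y = ∑ v : W, x ^ (n - wt (v : V n)) * y ^ wt (v : V n) := by
  have wt_mem : ∀ v ∈ ({v | v ∈ W} : Finset (V n)), wt v ∈ range (n + 1) :=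
    fun v _ => mem_range_succ_iff.mpr (wt_le v)
  rw [← sum_subtype _ (fun v => mem_filter_univ v) fun v : V n => x ^ (n - wt v) * y ^ wt v,
    ← sum_fiberwise_of_maps_to' wt_mem fun w => x ^ (n - w) * y ^ w]
  simp only [weightEnumerator, filter_filter, sum_const, nsmul_eq_mul]

lemma weightEnumerator_one_left (W : Submodule (ZMod 2) (V n)) (y : R) :
    weightEnumerator W 1 y = ∑ w ∈ range (n + 1), (#{v | v ∈ W ∧ wt v = w} : R) * y ^ w := by
  simp only [weightEnumerator, one_pow, one_mul]

lemma weightEnumerator_eq_pow_mul_sum {K : Type*} [Semifield K] (W : Submodule (ZMod 2) (V n))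
    {x : K} (hx : x ≠ 0) (y : K) :
    weightEnumerator W x y =
      x ^ n * ∑ w ∈ range (n + 1), (#{v | v ∈ W ∧ wt v = w} : K) * (y / x) ^ w := by
  rw [weightEnumerator, mul_sum]
  refine sum_congr rfl fun w hw => ?_
  rw [pow_sub₀ x hx (mem_range_succ_iff.mp hw), div_pow]
  ring

lemma card_filter_mem_ne_zero (W : Submodule (ZMod 2) (V n)) : #{v | v ∈ W} ≠ 0 :=
  card_ne_zero_of_mem (mem_filter_univ 0 |>.mpr W.zero_mem)

end WeightEnumerator

theorem macwilliams_poly_general {R : Type*} [CommRing R] {n : ℕ}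
    (W : Submodule (ZMod 2) (V n)) (x y : R) :
    (#{v | v ∈ W} : R) * weightEnumerator (sdual W) x y =
      weightEnumerator W (x + 3 * y) (x - y) := by
  simp only [weightEnumerator_eq_sum, ← symplFourier_pow_wt, sum_symplFourier, Fintype.card_subtype]

/-- MacWilliams identity for EAQEC codes (polynomial form):
`B(z) = (1/|W|) (1+3z)^n A((1−z)/(1+3z))` for every real `z` with `1 + 3z ≠ 0`. -/
theorem macwilliams_poly (n : ℕ) (hn : 1 ≤ n) (W : Submodule (ZMod 2) (V n))
    (z : ℝ) (hz : 1 + 3 * z ≠ 0) :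
    ∑ w ∈ Finset.range (n + 1),
        ((Finset.univ.filter (fun v => v ∈ sdual W ∧ wt v = w)).card : ℝ) * z ^ w =
      (1 / ((Finset.univ.filter (fun m => m ∈ W)).card : ℝ)) * (1 + 3 * z) ^ n *
        ∑ w' ∈ Finset.range (n + 1),
          ((Finset.univ.filter (fun v => v ∈ W ∧ wt v = w')).card : ℝ) *
            ((1 - z) / (1 + 3 * z)) ^ w' := by
  rw [mul_assoc, ← weightEnumerator_one_left, ← weightEnumerator_eq_pow_mul_sum W hz, one_div,
    ← macwilliams_poly_general,
    inv_mul_cancel_left₀ (Nat.cast_ne_zero.mpr (card_filter_mem_ne_zero W))]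
end

section
/- (Weight-enumerator bound on the MAP block error probability.) Let n ≥ 1, 0 ≤ k ≤ n, p ∈ [0,1], and let P(v) = (1−p)^{n−wt(v)}(p/3)^{wt(v)} and γ = 2√(p(1−p)/3) + 2p/3. Let S ⊆ V_n be an F₂-subspace with dim S = 2(n−k) and S ∩ S^⊥ = {0}, and set L = S^⊥, so that V_n = L ⊕ S and every E ∈ V_n decomposes uniquely as E = ℓ_E + s_E with ℓ_E ∈ L, s_E ∈ S. Let ℓ̂ : S → L be any map satisfying the maximum a posteriori property: for all s ∈ S and all ℓ ∈ L, P(ℓ̂(s) + s) ≥ P(ℓ + s). Then the block error probability satisfies Σ_{E ∈ V_n with ℓ̂(s_E) ≠ ℓ_E} P(E) ≤ Σ_{e ∈ L, e ≠ 0} γ^{wt(e)}; the right-hand side equals B(γ) − 1, where B is the weight enumerator of the logical group L. -/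
open Finset

open scoped Classical

/-- The depolarizing error distribution with parameter `p` on `V n`. -/
noncomputable def depolP (n : ℕ) (p : ℝ) (v : V n) : ℝ :=
  (1 - p) ^ (n - wt v) * (p / 3) ^ (wt v)

/-!
If the decoder errs on `E`, its estimate `F` of the error satisfies `P E ≤ P F`, so
`P E ≤ √(P E * P F)`, and `e = F - E` is a nonzero element of `L`. Summing this over `E`, and over
all nonzero `e ∈ L` instead of only the one chosen by the decoder, bounds the error probability by
the sum of the Bhattacharyya coefficients of `P` and its translates by `e`. For independent errors
this coefficient is a product over the letters: a letter with `e i = 0` contributes `1`, every other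
letter contributes `γ`.
-/

section BhattacharyyaCoefficient

/-- The Bhattacharyya coefficient `∑ x, √(P x * Q x)` of two distributions on a finite type,
given by their (not necessarily normalised) weights. -/
noncomputable def bhattCoeff {α : Type*} [Fintype α] (P Q : α → ℝ) : ℝ :=
  ∑ x, √(P x * Q x)

theorem bhattCoeff_self {α : Type*} [Fintype α] {P : α → ℝ} (hP : ∀ x, 0 ≤ P x) :
    bhattCoeff P P = ∑ x, P x :=
  Finset.sum_congr rfl fun x _ => Real.sqrt_mul_self (hP x)

theorem bhattCoeff_comp_equiv {α β : Type*} [Fintype α] [Fintype β] (φ : α ≃ β) (P Q : β → ℝ) :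
    bhattCoeff (P ∘ φ) (Q ∘ φ) = bhattCoeff P Q :=
  φ.sum_comp fun x => √(P x * Q x)

theorem bhattCoeff_pi {ι : Type*} [Fintype ι] {α : ι → Type*} [∀ i, Fintype (α i)]
    {P Q : ∀ i, α i → ℝ} (hP : ∀ i x, 0 ≤ P i x) (hQ : ∀ i x, 0 ≤ Q i x) :
    bhattCoeff (fun x : ∀ i, α i => ∏ i, P i (x i)) (fun x => ∏ i, Q i (x i)) =
      ∏ i, bhattCoeff (P i) (Q i) := by
  simp only [bhattCoeff, Fintype.prod_sum, ← Finset.prod_mul_distrib]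
  exact Finset.sum_congr rfl fun x _ =>
    Real.sqrt_prod _ fun i _ => mul_nonneg (hP i (x i)) (hQ i (x i))

theorem bhattCoeff_ite_translate {A : Type*} [AddGroup A] [Fintype A] [DecidableEq A]
    {a b : ℝ} (hb : 0 ≤ b) {c : A} (hc : c ≠ 0) :
    bhattCoeff (fun x => if x = 0 then a else b) (fun x => if c + x = 0 then a else b) =
      2 * √(a * b) + (Fintype.card A - 2) * b := by
  have term_eq (x : A) : √((if x = 0 then a else b) * (if c + x = 0 then a else b)) =
      b + (if x = 0 then √(a * b) - b else 0) + (if x = -c then √(a * b) - b else 0) := by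
    have add_eq_zero_iff : c + x = 0 ↔ x = -c := by rw [add_eq_zero_iff_neg_eq, eq_comm]
    have hc' : -c ≠ 0 := neg_ne_zero.2 hc
    by_cases hx : x = 0
    · simp [hx, hc, hc'.symm]
    · by_cases hxc : x = -c
      · simp [hxc, hc', mul_comm b a]
      · simp [hx, hxc, add_eq_zero_iff, Real.sqrt_mul_self hb]
  simp only [bhattCoeff, term_eq, Finset.sum_add_distrib, Finset.sum_ite_eq', Finset.mem_univ,
    if_true, Finset.sum_const, Finset.card_univ, nsmul_eq_mul]
  ring

end BhattacharyyaCoefficient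

section UnionBound

variable {G : Type*} [AddGroup G] [Fintype G] [DecidableEq G] {P : G → ℝ}

theorem sum_misestimated_le_sum_bhattCoeff (hP : ∀ E, 0 ≤ P E) {estimate : G → G} {D : Finset G}
    (hD : ∀ E, estimate E ≠ E → estimate E - E ∈ D) (hle : ∀ E, P E ≤ P (estimate E)) :
    ∑ E with estimate E ≠ E, P E ≤ ∑ e ∈ D, bhattCoeff P fun E => P (e + E) := by
  have le_sqrt (E : G) : P E ≤ √(P E * P (estimate E - E + E)) := by
    rw [sub_add_cancel]
    exact Real.le_sqrt_of_sq_le (by rw [sq]; exact mul_le_mul_of_nonneg_left (hle E) (hP E))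
  calc ∑ E with estimate E ≠ E, P E
      ≤ ∑ E with estimate E ≠ E, ∑ e ∈ D, √(P E * P (e + E)) :=
        Finset.sum_le_sum fun E hE => (le_sqrt E).trans <|
          Finset.single_le_sum (f := fun e => √(P E * P (e + E)))
            (fun _ _ => Real.sqrt_nonneg _) (hD E (Finset.mem_filter.1 hE).2)
    _ ≤ ∑ E, ∑ e ∈ D, √(P E * P (e + E)) :=
        Finset.sum_le_univ_sum_of_nonneg fun _ => Finset.sum_nonneg fun _ _ => Real.sqrt_nonneg _
    _ = ∑ e ∈ D, bhattCoeff P fun E => P (e + E) := Finset.sum_comm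

theorem maxAPosteriori_blockError_le_sum_bhattCoeff (hP : ∀ E, 0 ≤ P E)
    (L : AddSubgroup G) (S : Set G)
    (ℓpart spart : G → G) (hdec : ∀ E, ℓpart E ∈ L ∧ spart E ∈ S ∧ E = ℓpart E + spart E)
    (ℓhat : G → G) (hMAP : ∀ s ∈ S, ℓhat s ∈ L ∧ ∀ ℓ ∈ L, P (ℓ + s) ≤ P (ℓhat s + s)) :
    ∑ E with ℓhat (spart E) ≠ ℓpart E, P E ≤
      ∑ e with e ∈ L ∧ e ≠ 0, bhattCoeff P fun E => P (e + E) := by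
  set estimate : G → G := fun E => ℓhat (spart E) + spart E
  have sub_eq (E : G) : estimate E - E = ℓhat (spart E) - ℓpart E := by
    nth_rw 2 [(hdec E).2.2]
    exact add_sub_add_right_eq_sub ..
  have error_iff (E : G) : ℓhat (spart E) ≠ ℓpart E ↔ estimate E ≠ E := by
    rw [← sub_ne_zero, ← sub_eq, sub_ne_zero]
  simp only [error_iff]
  refine sum_misestimated_le_sum_bhattCoeff hP (fun E hE => ?_) fun E => ?_
  · have sub_mem : estimate E - E ∈ L :=
      sub_eq E ▸ L.sub_mem (hMAP _ (hdec E).2.1).1 (hdec E).1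
    exact Finset.mem_filter.2 ⟨Finset.mem_univ _, sub_mem, sub_ne_zero.2 hE⟩
  · nth_rw 1 [(hdec E).2.2]
    exact (hMAP _ (hdec E).2.1).2 _ (hdec E).1

end UnionBound

section Depolarizing

theorem prod_ite_eq_zero_eq_pow_hammingNorm {ι A M : Type*} [Fintype ι] [Zero A] [DecidableEq A]
    [CommMonoid M] (a b : M) (x : ι → A) :
    ∏ i, (if x i = 0 then a else b) =
      a ^ (Fintype.card ι - hammingNorm x) * b ^ hammingNorm x := by
  have card_zeros : #{i | x i = 0} = Fintype.card ι - hammingNorm x :=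
    Nat.eq_sub_of_add_eq (Finset.card_filter_add_card_filter_not _)
  rw [Finset.prod_ite, Finset.prod_const, Finset.prod_const, card_zeros]
  rfl

variable {ι A : Type*} [Fintype ι] [Fintype A] [AddGroup A] [DecidableEq A]

/-- The distribution of a single error of the depolarizing channel over an alphabet `A` with `q`
letters: no error with probability `1 - p`, each of the `q - 1` nonzero errors with the same
probability. For `q = 1` the division is by zero. -/
noncomputable def depolLetter (p : ℝ) (x : A) : ℝ :=
  if x = 0 then 1 - p else p / (Fintype.card A - 1)

/-- The depolarizing error distribution on words over `A`: independent errors, one per letter. -/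
noncomputable def depolWord (p : ℝ) (x : ι → A) : ℝ :=
  ∏ i, depolLetter p (x i)

/-- The Bhattacharyya parameter `γ` of the depolarizing channel over `q` letters: the
Bhattacharyya coefficient of `depolLetter p` and any of its nontrivial translates. -/
noncomputable def depolBhatt (q : ℕ) (p : ℝ) : ℝ :=
  2 * √(p * (1 - p) / (q - 1)) + (q - 2) * p / (q - 1)

variable {p : ℝ}

theorem depolLetter_nonneg (hp0 : 0 ≤ p) (hp1 : p ≤ 1) (x : A) : 0 ≤ depolLetter p x := by
  have one_le_card : (1 : ℝ) ≤ Fintype.card A := mod_cast Fintype.card_pos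
  unfold depolLetter
  split_ifs
  · exact sub_nonneg.2 hp1
  · exact div_nonneg hp0 (sub_nonneg.2 one_le_card)

theorem depolWord_nonneg (hp0 : 0 ≤ p) (hp1 : p ≤ 1) (x : ι → A) : 0 ≤ depolWord p x :=
  Finset.prod_nonneg fun i _ => depolLetter_nonneg hp0 hp1 (x i)

theorem sum_depolLetter [Nontrivial A] : ∑ x : A, depolLetter p x = 1 := by
  have card_sub_one_ne_zero : (Fintype.card A : ℝ) - 1 ≠ 0 :=
    sub_ne_zero.2 (mod_cast Fintype.one_lt_card.ne')
  have card_nonzero : (#{x : A | x ≠ 0} : ℝ) = Fintype.card A - 1 := by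
    rw [Finset.filter_ne', Finset.card_erase_of_mem (Finset.mem_univ 0), Finset.card_univ,
      Nat.cast_pred Fintype.card_pos]
  simp only [depolLetter, Finset.sum_ite, Finset.filter_eq', Finset.mem_univ, if_true,
    Finset.sum_const, Finset.card_singleton, nsmul_eq_mul, Nat.cast_one, one_mul]
  rw [card_nonzero, mul_div_cancel₀ _ card_sub_one_ne_zero, sub_add_cancel]

theorem bhattCoeff_depolLetter_translate [Nontrivial A] (hp0 : 0 ≤ p) (hp1 : p ≤ 1) (c : A) :
    bhattCoeff (depolLetter p) (fun x => depolLetter p (c + x)) =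
      if c = 0 then 1 else depolBhatt (Fintype.card A) p := by
  split_ifs with hc
  · simp only [hc, zero_add]
    exact (bhattCoeff_self (depolLetter_nonneg hp0 hp1)).trans sum_depolLetter
  · have prob_nonneg : 0 ≤ p / (Fintype.card A - 1) :=
      div_nonneg hp0 (sub_nonneg.2 (mod_cast Fintype.card_pos))
    rw [depolBhatt, mul_comm p, mul_div_assoc, mul_div_assoc]
    exact bhattCoeff_ite_translate prob_nonneg hc

theorem bhattCoeff_depolWord_translate [Nontrivial A] (hp0 : 0 ≤ p) (hp1 : p ≤ 1) (e : ι → A) :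
    bhattCoeff (depolWord p) (fun x => depolWord p (e + x)) =
      depolBhatt (Fintype.card A) p ^ hammingNorm e := by
  calc bhattCoeff (depolWord p) (fun x => depolWord p (e + x))
      = ∏ i, bhattCoeff (depolLetter p) (fun x => depolLetter p (e i + x)) :=
        bhattCoeff_pi (fun _ => depolLetter_nonneg hp0 hp1)
          fun i x => depolLetter_nonneg hp0 hp1 (e i + x)
    _ = ∏ i, if e i = 0 then 1 else depolBhatt (Fintype.card A) p :=
        Finset.prod_congr rfl fun i _ => bhattCoeff_depolLetter_translate hp0 hp1 (e i)
    _ = depolBhatt (Fintype.card A) p ^ hammingNorm e := by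
        rw [prod_ite_eq_zero_eq_pow_hammingNorm, one_pow, one_mul]

end Depolarizing

section Pauli

/-- The Pauli operator `(x, z)` read as the word of its single-qubit operators `(x i, z i)`. -/
def pauliWord (n : ℕ) : V n ≃+ (Fin n → ZMod 2 × ZMod 2) where
  toEquiv := (Equiv.arrowProdEquivProdArrow (Fin n) (fun _ => ZMod 2) fun _ => ZMod 2).symm
  map_add' _ _ := rfl

theorem wt_eq_hammingNorm_pauliWord {n : ℕ} (v : V n) : wt v = hammingNorm (pauliWord n v) := by
  refine congrArg Finset.card (Finset.filter_congr fun i _ => ?_)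
  exact Prod.mk_eq_zero.symm.not

theorem depolP_eq_depolWord_pauliWord {n : ℕ} (p : ℝ) (v : V n) :
    depolP n p v = depolWord p (pauliWord n v) := by
  simp only [depolP, depolWord, depolLetter, prod_ite_eq_zero_eq_pow_hammingNorm,
    wt_eq_hammingNorm_pauliWord]
  norm_num

theorem depolBhatt_card_pauli (p : ℝ) :
    depolBhatt (Fintype.card (ZMod 2 × ZMod 2)) p = 2 * √(p * (1 - p) / 3) + 2 * p / 3 := by
  norm_num [depolBhatt]

end Pauli

theorem MAP_block_error_weight_enumerator_bound_general {ι A G : Type*}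
    [Fintype ι] [Fintype A] [AddGroup A] [Nontrivial A] [DecidableEq A]
    [Fintype G] [AddGroup G] [DecidableEq G] (φ : G ≃+ (ι → A))
    {p : ℝ} (hp0 : 0 ≤ p) (hp1 : p ≤ 1) (L : AddSubgroup G) (S : Set G)
    (ℓpart spart : G → G) (hdec : ∀ E, ℓpart E ∈ L ∧ spart E ∈ S ∧ E = ℓpart E + spart E)
    (ℓhat : G → G) (hMAP : ∀ s ∈ S, ℓhat s ∈ L ∧
      ∀ ℓ ∈ L, depolWord p (φ (ℓ + s)) ≤ depolWord p (φ (ℓhat s + s))) :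
    ∑ E with ℓhat (spart E) ≠ ℓpart E, depolWord p (φ E) ≤
      ∑ e with e ∈ L ∧ e ≠ 0, depolBhatt (Fintype.card A) p ^ hammingNorm (φ e) := by
  have bhattCoeff_eq (e : G) :
      bhattCoeff (fun E => depolWord p (φ E)) (fun E => depolWord p (φ (e + E))) =
        depolBhatt (Fintype.card A) p ^ hammingNorm (φ e) := by
    simp only [map_add]
    exact (bhattCoeff_comp_equiv φ.toEquiv _ _).trans
      (bhattCoeff_depolWord_translate hp0 hp1 (φ e))
  simp only [← bhattCoeff_eq]
  exact maxAPosteriori_blockError_le_sum_bhattCoeff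
    (fun E => depolWord_nonneg hp0 hp1 (φ E)) L S ℓpart spart hdec ℓhat hMAP

/-- Weight-enumerator bound on the MAP block error probability of a
maximal-entanglement `[[n,k;n−k]]` EAQEC code: the block error probability of any
MAP decoder is at most `B(γ) − 1 = ∑_{0 ≠ e ∈ L} γ^{wt e}`. -/
theorem MAP_block_error_weight_enumerator_bound (n k : ℕ) (hn : 1 ≤ n) (hk : k ≤ n)
    (p : ℝ) (hp0 : 0 ≤ p) (hp1 : p ≤ 1)
    (S : Submodule (ZMod 2) (V n))
    (hdim : Module.finrank (ZMod 2) S = 2 * (n - k))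
    (hrad : S ⊓ sdual S = ⊥)
    (ℓpart spart : V n → V n)
    (hdec : ∀ E : V n, ℓpart E ∈ sdual S ∧ spart E ∈ S ∧ E = ℓpart E + spart E)
    (ℓhat : V n → V n)
    (hMAP : ∀ s' ∈ S, ℓhat s' ∈ sdual S ∧
      ∀ ℓ' ∈ sdual S, depolP n p (ℓ' + s') ≤ depolP n p (ℓhat s' + s')) :
    ∑ E ∈ Finset.univ.filter (fun E => ℓhat (spart E) ≠ ℓpart E), depolP n p E ≤
      ∑ e ∈ Finset.univ.filter (fun e => e ∈ sdual S ∧ e ≠ 0),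
        (2 * Real.sqrt (p * (1 - p) / 3) + 2 * p / 3) ^ (wt e) := by
  simp only [depolP_eq_depolWord_pauliWord, wt_eq_hammingNorm_pauliWord, ← depolBhatt_card_pauli]
    at hMAP ⊢
  exact MAP_block_error_weight_enumerator_bound_general (pauliWord n) hp0 hp1
    (sdual S).toAddSubgroup S ℓpart spart hdec ℓhat hMAP
end
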